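/- For any field F and any x ≠ y in F^♭, the five-term element lies in the kernel of δ_F; that is, x∧(1−x) − y∧(1−y) + (y/x)∧(1−y/x) + ((1−x)/(1−y))∧(1−(1−x)/(1−y)) − ((1−x⁻¹)/(1−y⁻¹))∧(1−(1−x⁻¹)/(1−y⁻¹)) = 0 in ∧²F*. Consequently δ_F(R_5(F)) = 0. -/

import Mathlib

open TensorProduct

namespace BlochPaper

/-- `F^♭ = F \ {0,1}`. -/
def Flat (F : Type*) [Field F] : Type _ := {x : F // x ≠ 0 ∧ x ≠ 1}

variable (F : Type*) [Field F]

/-- `ℤ[F^♭]`, the free abelian group on `F^♭`. -/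
abbrev ZFlat : Type _ := FreeAbelianGroup (Flat F)

/-- `F* ⊗_ℤ F*` (written additively). -/
abbrev Tens : Type _ := TensorProduct ℤ (Additive Fˣ) (Additive Fˣ)

/-- relations `x⊗y + y⊗x`. -/
noncomputable def symRel : AddSubgroup (Tens F) :=
  AddSubgroup.closure {z | ∃ x y : Fˣ,
    z = Additive.ofMul x ⊗ₜ[ℤ] Additive.ofMul y + Additive.ofMul y ⊗ₜ[ℤ] Additive.ofMul x}

/-- `∧² F*`. -/
abbrev Wedge : Type _ := Tens F ⧸ symRel F

/-- relations `x⊗y + y⊗x` and `x⊗x - x⊗(-1)`. -/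
noncomputable def symRel2 : AddSubgroup (Tens F) :=
  AddSubgroup.closure
    ({z | ∃ x y : Fˣ,
        z = Additive.ofMul x ⊗ₜ[ℤ] Additive.ofMul y + Additive.ofMul y ⊗ₜ[ℤ] Additive.ofMul x} ∪
     {z | ∃ x : Fˣ,
        z = Additive.ofMul x ⊗ₜ[ℤ] Additive.ofMul x
          - Additive.ofMul x ⊗ₜ[ℤ] Additive.ofMul (-1 : Fˣ)})

/-- `∧~² F*`. -/
abbrev TWedge : Type _ := Tens F ⧸ symRel2 F

variable {F}

/-- `x ∧ y` in `∧² F*`. -/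
noncomputable def wedge (x y : Fˣ) : Wedge F :=
  QuotientAddGroup.mk (Additive.ofMul x ⊗ₜ[ℤ] Additive.ofMul y)

/-- `x ∧~ y` in `∧~² F*`. -/
noncomputable def twedge (x y : Fˣ) : TWedge F :=
  QuotientAddGroup.mk (Additive.ofMul x ⊗ₜ[ℤ] Additive.ofMul y)

/-- `x` as a unit, for `x ∈ F^♭`. -/
def unitsOf (x : Flat F) : Fˣ := Units.mk0 x.1 x.2.1

/-- `1 - x` as a unit, for `x ∈ F^♭`. -/
def unitsOneSub (x : Flat F) : Fˣ :=
  Units.mk0 (1 - x.1) (sub_ne_zero_of_ne (Ne.symm x.2.2))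

variable (F)

/-- Suslin's map `δ_F : ℤ[F^♭] → ∧²F*`, `[x] ↦ x ∧ (1-x)`. -/
noncomputable def dlt : ZFlat F →+ Wedge F :=
  FreeAbelianGroup.lift (fun x : Flat F => wedge (unitsOf x) (unitsOneSub x))

/-- The map `∂_F : ℤ[F^♭] → ∧~²F*`, `[x] ↦ x ∧~ (1-x)`. -/
noncomputable def bd : ZFlat F →+ TWedge F :=
  FreeAbelianGroup.lift (fun x : Flat F => twedge (unitsOf x) (unitsOneSub x))

variable {F}

lemma flat_div (x y : Flat F) (h : x ≠ y) : y.1 / x.1 ≠ 0 ∧ y.1 / x.1 ≠ 1 := by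
  refine ⟨div_ne_zero y.2.1 x.2.1, fun hh => h ?_⟩
  exact Subtype.ext (((div_eq_one_iff_eq x.2.1).mp hh).symm)

lemma flat_sub (x y : Flat F) (h : x ≠ y) :
    (1 - x.1) / (1 - y.1) ≠ 0 ∧ (1 - x.1) / (1 - y.1) ≠ 1 := by
  have hx : (1 : F) - x.1 ≠ 0 := sub_ne_zero_of_ne (Ne.symm x.2.2)
  have hy : (1 : F) - y.1 ≠ 0 := sub_ne_zero_of_ne (Ne.symm y.2.2)
  refine ⟨div_ne_zero hx hy, fun hh => h ?_⟩
  have := (div_eq_one_iff_eq hy).mp hh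
  exact Subtype.ext (by linear_combination -this)

lemma flat_inv (x : Flat F) : x.1⁻¹ ≠ 0 ∧ x.1⁻¹ ≠ 1 :=
  ⟨inv_ne_zero x.2.1, fun hh => x.2.2 (by simpa [inv_eq_one] using hh)⟩

lemma flat_subinv (x y : Flat F) (h : x ≠ y) :
    (1 - x.1⁻¹) / (1 - y.1⁻¹) ≠ 0 ∧ (1 - x.1⁻¹) / (1 - y.1⁻¹) ≠ 1 := by
  have hx : (1 : F) - x.1⁻¹ ≠ 0 := sub_ne_zero_of_ne (Ne.symm (flat_inv x).2)
  have hy : (1 : F) - y.1⁻¹ ≠ 0 := sub_ne_zero_of_ne (Ne.symm (flat_inv y).2)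
  refine ⟨div_ne_zero hx hy, fun hh => h ?_⟩
  have h2 := (div_eq_one_iff_eq hy).mp hh
  have h3 : x.1⁻¹ = y.1⁻¹ := by linear_combination -h2
  exact Subtype.ext (inv_injective h3)

/-- the five-term element `[x] - [y] + [y/x] + [(1-x)/(1-y)] - [(1-x⁻¹)/(1-y⁻¹)]`. -/
noncomputable def fiveEl (x y : Flat F) (h : x ≠ y) : ZFlat F :=
  FreeAbelianGroup.of x - FreeAbelianGroup.of y
    + FreeAbelianGroup.of ⟨y.1 / x.1, flat_div x y h⟩
    + FreeAbelianGroup.of ⟨(1 - x.1) / (1 - y.1), flat_sub x y h⟩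
    - FreeAbelianGroup.of ⟨(1 - x.1⁻¹) / (1 - y.1⁻¹), flat_subinv x y h⟩

/-- the element `[x] + [x⁻¹]`. -/
noncomputable def invEl (x : Flat F) : ZFlat F :=
  FreeAbelianGroup.of x + FreeAbelianGroup.of ⟨x.1⁻¹, flat_inv x⟩

variable (F)

/-- `R_5(F)`. -/
noncomputable def R5 : AddSubgroup (ZFlat F) :=
  AddSubgroup.closure {z | ∃ (x y : Flat F) (h : x ≠ y), z = fiveEl x y h}

/-- `R_{5,2}(F)`. -/
noncomputable def R52 : AddSubgroup (ZFlat F) :=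
  AddSubgroup.closure
    ({z | ∃ (x y : Flat F) (h : x ≠ y), z = fiveEl x y h} ∪
     {z | ∃ x : Flat F, z = invEl x})

end BlochPaper

/-!
Put `a = x`, `b = y`, `c = 1 - x`, `d = 1 - y` and `e = x - y`. The last three arguments `z` of the
five-term element are quotients of products of these units, and so are the `1 - z`:

* `z = b / a`, `1 - z = e / a`;
* `z = c / d`, `1 - z = e / d`;
* `z = b c / (a d)`, `1 - z = e / (a d)`.

With these substitutions the sum of the `z ∧ (1 - z)` vanishes for arbitrary `a`, `b`, `c`, `d`,
`e`, by bilinearity and skew-symmetry alone.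
-/

namespace BlochPaper

lemma five_term_eq_zero_of_skew {A M : Type*} [AddCommGroup A] [AddCommGroup M] (B : A →+ A →+ M)
    (hB : ∀ u v, B u v + B v u = 0) (a b c d e : A) :
    B a c - B b d + B (b - a) (e - a) + B (c - d) (e - d)
      - B (b + c - (a + d)) (e - (a + d)) = 0 := by
  have hca : B c a = -B a c := eq_neg_of_add_eq_zero_left (hB c a)
  have hda : B d a = -B a d := eq_neg_of_add_eq_zero_left (hB d a)
  simp only [map_add, map_sub, AddMonoidHom.add_apply, AddMonoidHom.sub_apply, hca, hda]
  abel

section Wedge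

variable {F : Type*} [Field F]

variable (F) in
/-- The biadditive map `(x, y) ↦ x ∧ y`, on `F*` written additively. -/
noncomputable def wedgeHom : Additive Fˣ →+ Additive Fˣ →+ Wedge F :=
  (AddMonoidHom.compHom (QuotientAddGroup.mk' (symRel F))).comp
    (LinearMap.toAddMonoidHom'.comp
      (TensorProduct.mk ℤ (Additive Fˣ) (Additive Fˣ)).toAddMonoidHom)

lemma wedgeHom_ofMul (x y : Fˣ) :
    wedgeHom F (Additive.ofMul x) (Additive.ofMul y) = wedge x y :=
  rfl

lemma wedge_add_wedge_swap (x y : Fˣ) : wedge x y + wedge y x = 0 :=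
  (QuotientAddGroup.eq_zero_iff _).mpr (AddSubgroup.subset_closure ⟨x, y, rfl⟩)

lemma wedge_five_term_eq_zero (a b c d e : Fˣ) :
    wedge a c - wedge b d + wedge (b / a) (e / a) + wedge (c / d) (e / d)
      - wedge (b * c / (a * d)) (e / (a * d)) = 0 := by
  have hskew (u v : Additive Fˣ) : wedgeHom F u v + wedgeHom F v u = 0 :=
    wedge_add_wedge_swap u.toMul v.toMul
  simpa only [← ofMul_div, ← ofMul_mul, wedgeHom_ofMul] using
    five_term_eq_zero_of_skew (wedgeHom F) hskew (.ofMul a) (.ofMul b) (.ofMul c) (.ofMul d)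
      (.ofMul e)

end Wedge

section Arguments

variable {F : Type*} [Field F]

/-- `x - y` as a unit, for `x ≠ y` in `F^♭`. -/
def unitsSub (x y : Flat F) (h : x ≠ y) : Fˣ :=
  Units.mk0 (x.1 - y.1) (sub_ne_zero_of_ne (Subtype.coe_ne_coe.mpr h))

lemma one_sub_inv_div_one_sub_inv {a b : F} (ha : a ≠ 0) (hb : b ≠ 0) :
    (1 - a⁻¹) / (1 - b⁻¹) = b * (1 - a) / (a * (1 - b)) := by
  rw [← mul_div_mul_left (1 - a⁻¹) (1 - b⁻¹) (neg_ne_zero.mpr (mul_ne_zero ha hb))]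
  congr 1 <;> field_simp <;> ring

lemma unitsOf_flat_div (x y : Flat F) (h : x ≠ y) :
    unitsOf (⟨y.1 / x.1, flat_div x y h⟩ : Flat F) = unitsOf y / unitsOf x := by
  ext
  simp [unitsOf]

lemma unitsOneSub_flat_div (x y : Flat F) (h : x ≠ y) :
    unitsOneSub (⟨y.1 / x.1, flat_div x y h⟩ : Flat F) = unitsSub x y h / unitsOf x := by
  ext
  simp [unitsOf, unitsOneSub, unitsSub, one_sub_div x.2.1]

lemma unitsOf_flat_sub (x y : Flat F) (h : x ≠ y) :
    unitsOf (⟨(1 - x.1) / (1 - y.1), flat_sub x y h⟩ : Flat F)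
      = unitsOneSub x / unitsOneSub y := by
  ext
  simp [unitsOf, unitsOneSub]

lemma unitsOneSub_flat_sub (x y : Flat F) (h : x ≠ y) :
    unitsOneSub (⟨(1 - x.1) / (1 - y.1), flat_sub x y h⟩ : Flat F)
      = unitsSub x y h / unitsOneSub y := by
  ext
  simp [unitsOneSub, unitsSub, one_sub_div (sub_ne_zero_of_ne y.2.2.symm)]

lemma unitsOf_flat_subinv (x y : Flat F) (h : x ≠ y) :
    unitsOf (⟨(1 - x.1⁻¹) / (1 - y.1⁻¹), flat_subinv x y h⟩ : Flat F)
      = unitsOf y * unitsOneSub x / (unitsOf x * unitsOneSub y) := by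
  ext
  simp [unitsOf, unitsOneSub, one_sub_inv_div_one_sub_inv x.2.1 y.2.1]

lemma unitsOneSub_flat_subinv (x y : Flat F) (h : x ≠ y) :
    unitsOneSub (⟨(1 - x.1⁻¹) / (1 - y.1⁻¹), flat_subinv x y h⟩ : Flat F)
      = unitsSub x y h / (unitsOf x * unitsOneSub y) := by
  have hxy : x.1 * (1 - y.1) ≠ 0 := (unitsOf x * unitsOneSub y).ne_zero
  have hnum : x.1 * (1 - y.1) - y.1 * (1 - x.1) = x.1 - y.1 := by ring
  ext
  simp [unitsOf, unitsOneSub, unitsSub, one_sub_inv_div_one_sub_inv x.2.1 y.2.1, one_sub_div hxy,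
    hnum]

end Arguments

section Kernel

variable {F : Type*} [Field F]

lemma dlt_of (x : Flat F) :
    dlt F (FreeAbelianGroup.of x) = wedge (unitsOf x) (unitsOneSub x) :=
  FreeAbelianGroup.lift_apply_of _ x

-- `Flat` is not reducible, so `simp` cannot apply `dlt_of` to an anonymous constructor.
lemma dlt_of_mk (a : F) (ha : a ≠ 0 ∧ a ≠ 1) :
    dlt F (FreeAbelianGroup.of (⟨a, ha⟩ : Flat F))
      = wedge (unitsOf (⟨a, ha⟩ : Flat F)) (unitsOneSub (⟨a, ha⟩ : Flat F)) :=
  dlt_of _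

lemma dlt_fiveEl_eq_zero (x y : Flat F) (h : x ≠ y) : dlt F (fiveEl x y h) = 0 := by
  simp only [fiveEl, map_add, map_sub, dlt_of, dlt_of_mk]
  rw [unitsOf_flat_div x y h, unitsOneSub_flat_div x y h, unitsOf_flat_sub x y h,
    unitsOneSub_flat_sub x y h, unitsOf_flat_subinv x y h, unitsOneSub_flat_subinv x y h]
  exact wedge_five_term_eq_zero _ _ _ _ _

variable (F) in
lemma R5_le_ker_dlt : R5 F ≤ (dlt F).ker := by
  rw [R5, AddSubgroup.closure_le]
  rintro _ ⟨x, y, h, rfl⟩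
  exact dlt_fiveEl_eq_zero x y h

end Kernel

/-- For any field `F` and `x ≠ y` in `F^♭`, the five-term element lies in the kernel of
`δ_F`: the alternating sum of the elements `z ∧ (1 - z)`, for `z` running through the five
arguments `x`, `y`, `y/x`, `(1-x)/(1-y)`, `(1-x⁻¹)/(1-y⁻¹)`, vanishes in `∧²F*`.
Consequently `δ_F(R_5(F)) = 0`. -/
theorem five_term_in_ker_delta (F : Type*) [Field F] (x y : Flat F) (h : x ≠ y) :
    (wedge (unitsOf x) (unitsOneSub x)
      - wedge (unitsOf y) (unitsOneSub y)
      + wedge (unitsOf (⟨y.1 / x.1, flat_div x y h⟩ : Flat F))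
          (unitsOneSub (⟨y.1 / x.1, flat_div x y h⟩ : Flat F))
      + wedge (unitsOf (⟨(1 - x.1) / (1 - y.1), flat_sub x y h⟩ : Flat F))
          (unitsOneSub (⟨(1 - x.1) / (1 - y.1), flat_sub x y h⟩ : Flat F))
      - wedge (unitsOf (⟨(1 - x.1⁻¹) / (1 - y.1⁻¹), flat_subinv x y h⟩ : Flat F))
          (unitsOneSub (⟨(1 - x.1⁻¹) / (1 - y.1⁻¹), flat_subinv x y h⟩ : Flat F)) : Wedge F)
      = 0 ∧
    ∀ z ∈ R5 F, dlt F z = 0 := by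
  refine ⟨?_, fun _ hz => R5_le_ker_dlt F hz⟩
  simpa only [fiveEl, map_add, map_sub, dlt_of, dlt_of_mk] using dlt_fiveEl_eq_zero x y h

end BlochPaper
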